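/- There are no self-dual synchronized Tamari intervals of even size, and for k ≥ 0 the number of self-dual synchronized Tamari intervals of size 2k+1 equals (1/(k+1)) · C(3k+1, k). -/

import Mathlib

/-- Binary trees: a leaf or a binary node with two subtrees. -/
inductive BT : Type
  | leaf : BT
  | node : BT → BT → BT

namespace BT

/-- Number of binary (internal) nodes. -/
def size : BT → ℕ
  | leaf => 0
  | node l r => l.size + r.size + 1

/-- One right rotation somewhere in the tree: ((A,B),C) ↦ (A,(B,C)). -/
inductive Rot : BT → BT → Prop
  | rotate (A B C : BT) : Rot (node (node A B) C) (node A (node B C))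
  | left {l l' : BT} (r : BT) : Rot l l' → Rot (node l r) (node l' r)
  | right (l : BT) {r r' : BT} : Rot r r' → Rot (node l r) (node l r')

/-- Tamari order: reflexive-transitive closure of right rotation. -/
def tle (T T' : BT) : Prop := Relation.ReflTransGen Rot T T'

/-- Bracket-vector: sizes of right subtrees of nodes, in infix order. -/
def bracket : BT → List ℕ
  | leaf => []
  | node l r => bracket l ++ r.size :: bracket r

/-- Dual bracket-vector: sizes of left subtrees of nodes, in infix order. -/
def dualBracket : BT → List ℕ
  | leaf => []
  | node l r => dualBracket l ++ l.size :: dualBracket r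

/-- Canopy word: for each leaf (left to right), 1 if it is a left child, 0 if a right child;
the argument `b` is the value assigned to the tree if it is itself a leaf. -/
def canopyAux (b : ℕ) : BT → List ℕ
  | leaf => [b]
  | node l r => canopyAux 1 l ++ canopyAux 0 r

/-- Canopy-vector of a binary tree. -/
def canopy (T : BT) : List ℕ := canopyAux 1 T

/-- Left-right mirror. -/
def mir : BT → BT
  | leaf => leaf
  | node l r => node (mir r) (mir l)

/-- Tamari interval of size n. -/
def interval (p : BT × BT) (n : ℕ) : Prop :=
  p.1.size = n ∧ p.2.size = n ∧ tle p.1 p.2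

/-- Tamari interval (of unspecified size). -/
def isInt (p : BT × BT) : Prop := p.1.size = p.2.size ∧ tle p.1 p.2

/-- The rise operation (T,T') ↦ ((T,ε),(ε,T')). -/
def riseF (p : BT × BT) : BT × BT := (node p.1 leaf, node leaf p.2)

/-- An interval is modern when its rise is again an interval. -/
def modern (p : BT × BT) : Prop := tle (node p.1 leaf) (node leaf p.2)

/-- Infinitely modern: every iterated rise is an interval. -/
def infModern (p : BT × BT) : Prop :=
  ∀ k : ℕ, tle ((riseF^[k] p).1) ((riseF^[k] p).2)

/-- Synchronized: equal canopies. -/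
def synced (p : BT × BT) : Prop := canopy p.1 = canopy p.2

/-- Self-dual: equal to its dual (mir T', mir T). -/
def selfDual (p : BT × BT) : Prop := mir p.2 = p.1 ∧ mir p.1 = p.2

/-- Number of positions where the two canopies agree. -/
def agreeCount (p : BT × BT) : ℕ :=
  ((List.range (p.1.size + 1)).filter
    (fun i => (canopy p.1).getD i 0 == (canopy p.2).getD i 0)).length

/-- Number of canopy positions of joint type (a on top, b on bottom), for an interval (T,T')
with T' the upper tree. -/
def typeCount (a b : ℕ) (p : BT × BT) : ℕ :=
  ((List.range (p.1.size + 1)).filter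
    (fun i => ((canopy p.2).getD i 0 == a) && ((canopy p.1).getD i 0 == b))).length

end BT

namespace BT

/-- Length of the left branch. -/
def lb : BT → ℕ
  | leaf => 0
  | node l _ => l.lb + 1

/-- Insert a new node with left subtree `A` at depth `q` of the left branch of `M`. -/
def ins (A : BT) : ℕ → BT → BT
  | 0, M => node A M
  | _ + 1, leaf => node A leaf
  | q + 1, node M1 M2 => node (ins A q M1) M2

theorem tle_size {X Y : BT} (h : tle X Y) : X.size = Y.size := by
  have rot : ∀ {X Y : BT}, Rot X Y → X.size = Y.size := by
    intro X Y h
    induction h with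
    | rotate A B C => simp only [size]; omega
    | left r _ ih => simp only [size]; omega
    | right l _ ih => simp only [size]; omega
  induction h with
  | refl => rfl
  | tail _ h ih => rw [ih, rot h]

theorem tle_left {X Y : BT} (r : BT) (h : tle X Y) : tle (node X r) (node Y r) := by
  induction h with
  | refl => exact .refl
  | tail _ h ih => exact .tail ih (.left r h)

theorem tle_right {X Y : BT} (l : BT) (h : tle X Y) : tle (node l X) (node l Y) := by
  induction h with
  | refl => exact .refl
  | tail _ h ih => exact .tail ih (.right l h)

theorem tle_node {A B A' B' : BT} (h : tle A A') (h' : tle B B') :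
    tle (node A B) (node A' B') := (tle_left B h).trans (tle_right A' h')

theorem ins_tle (A : BT) : ∀ (q : ℕ) (M : BT), tle (ins A q M) (node A M)
  | 0, M => .refl
  | _ + 1, leaf => .refl
  | q + 1, node M1 M2 => (tle_left M2 (ins_tle A q M1)).tail (.rotate A M1 M2)

theorem rot_ins {Y : BT} (A : BT) : ∀ (q : ℕ) (M : BT), Rot Y (ins A q M) →
    ∃ A0 M0 q0, tle A0 A ∧ tle M0 M ∧ Y = ins A0 q0 M0 := by
  intro q
  induction q generalizing Y with
  | zero =>
    intro M h
    simp only [ins] at h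
    cases h with
    | rotate A B C => exact ⟨A, node B C, 1, .refl, .refl, rfl⟩
    | left r h => exact ⟨_, M, 0, .single h, .refl, rfl⟩
    | right l h => exact ⟨A, _, 0, .refl, .single h, rfl⟩
  | succ q ih =>
    intro M h
    cases M with
    | leaf =>
      simp only [ins] at h
      cases h with
      | left r h => exact ⟨_, leaf, 0, .single h, .refl, rfl⟩
      | right l h => cases h
    | node M1 M2 =>
      simp only [ins] at h
      generalize hX : ins A q M1 = X at h
      cases h with
      | rotate _ B C =>
        refine ⟨A, node (node M1 B) C, q + 2, .refl, .single (.rotate _ _ _), ?_⟩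
        simp only [ins, hX]
      | left r h =>
        subst hX
        obtain ⟨A0, M0, q0, h1, h2, rfl⟩ := ih M1 h
        exact ⟨A0, node M0 M2, q0 + 1, h1, tle_left _ h2, rfl⟩
      | right l h =>
        subst hX
        rename_i r
        exact ⟨A, node M1 r, q + 1, .refl, .single (.right _ h), rfl⟩

theorem tle_node_iff {X A' M' : BT} : tle X (node A' M') ↔
    ∃ A M q, tle A A' ∧ tle M M' ∧ X = ins A q M := by
  constructor
  · intro h
    induction h using Relation.ReflTransGen.head_induction_on with
    | refl => exact ⟨A', M', 0, .refl, .refl, rfl⟩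
    | head h _ ih =>
      obtain ⟨A, M, q, h1, h2, rfl⟩ := ih
      obtain ⟨A0, M0, q0, h3, h4, rfl⟩ := rot_ins A q M h
      exact ⟨A0, M0, q0, h3.trans h1, h4.trans h2, rfl⟩
  · rintro ⟨A, M, q, h1, h2, rfl⟩
    exact (ins_tle A q M).trans (tle_node h1 h2)

theorem size_ins (A : BT) : ∀ (q : ℕ) (M : BT), (ins A q M).size = A.size + M.size + 1
  | 0, M => rfl
  | _ + 1, leaf => rfl
  | q + 1, node M1 M2 => by simp only [ins, size, size_ins A q M1]; omega

theorem lb_ins (A : BT) : ∀ (q : ℕ) (M : BT), q ≤ M.lb → (ins A q M).lb = A.lb + q + 1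
  | 0, M, _ => rfl
  | _ + 1, leaf, h => by simp [lb] at h
  | q + 1, node M1 M2, h => by
    simp only [lb] at h
    simp only [ins, lb, lb_ins A q M1 (by omega)]; omega

theorem ins_min (A : BT) : ∀ (q : ℕ) (M : BT), ins A (min q M.lb) M = ins A q M
  | 0, M => by simp
  | _ + 1, leaf => by simp [lb, ins]
  | q + 1, node M1 M2 => by
    have : min (q + 1) (node M1 M2).lb = min q M1.lb + 1 := by simp only [lb]; omega
    rw [this]; simp only [ins, ins_min A q M1]

theorem ins_inj {A B : BT} (hs : A.size = B.size) : ∀ (q : ℕ) (M : BT) (q' : ℕ) (M' : BT),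
    q ≤ M.lb → q' ≤ M'.lb → ins A q M = ins B q' M' → A = B ∧ q = q' ∧ M = M'
  | 0, M, 0, M', _, _, h => by simp_all [ins]
  | _ + 1, leaf, _, _, h, _, _ => by simp [lb] at h
  | _, _, _ + 1, leaf, _, h, _ => by simp [lb] at h
  | 0, M, q' + 1, node M1 M2, _, _, h => by
    simp only [ins, node.injEq] at h
    have := congrArg size h.1
    rw [size_ins] at this; omega
  | q + 1, node M1 M2, 0, M', _, _, h => by
    simp only [ins, node.injEq] at h
    have := congrArg size h.1
    rw [size_ins] at this; omega
  | q + 1, node M1 M2, q' + 1, node N1 N2, h1, h2, h => by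
    simp only [ins, node.injEq] at h
    simp only [lb] at h1 h2
    obtain ⟨a, b, c⟩ := ins_inj hs q M1 q' N1 (by omega) (by omega) h.1
    exact ⟨a, by omega, by rw [c, h.2]⟩

theorem length_canopyAux : ∀ (T : BT) (b : ℕ), (canopyAux b T).length = T.size + 1
  | leaf, b => rfl
  | node l r, b => by
    simp only [canopyAux, List.length_append, length_canopyAux l, length_canopyAux r, size]; omega

theorem canopyAux_head : ∀ (l r : BT) (b : ℕ), ∃ w, canopyAux b (node l r) = 1 :: w
  | leaf, r, b => ⟨_, rfl⟩
  | node l1 l2, r, b => by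
    obtain ⟨w, hw⟩ := canopyAux_head l1 l2 1
    exact ⟨w ++ canopyAux 0 r, by rw [canopyAux, hw]; rfl⟩

theorem canopy_zero_iff {M N : BT} (h : M.size = N.size) :
    canopyAux 0 M = canopyAux 0 N ↔ canopyAux 1 M = canopyAux 1 N := by
  cases M <;> cases N <;> simp_all [size, canopyAux]

theorem canopyAux_ins (A : BT) (b : ℕ) : ∀ (q : ℕ) (M : BT), q < max 1 M.lb →
    canopyAux b (ins A q M) = canopyAux 1 A ++ canopyAux 0 M
  | 0, M, _ => rfl
  | _ + 1, leaf, h => by simp [lb] at h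
  | q + 1, node M1 M2, h => by
    simp only [lb] at h
    simp only [ins, canopyAux]
    rw [canopyAux_ins_aux A 1 q M1 (by omega)]
    cases M1 with
    | leaf => simp [lb] at h
    | node a b => simp [canopyAux]
where canopyAux_ins_aux (A : BT) (b : ℕ) (q : ℕ) (M : BT) (h : q < M.lb) :
    canopyAux b (ins A q M) = canopyAux 1 A ++ canopyAux 0 M :=
    canopyAux_ins A b q M (by omega)

theorem canopyAux_ins_bad (A : BT) (b : ℕ) : ∀ (M : BT),
    ∃ w, canopyAux b (ins A M.lb M) = canopyAux 1 A ++ 0 :: w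
  | leaf => ⟨[], rfl⟩
  | node M1 M2 => by
    obtain ⟨w, hw⟩ := canopyAux_ins_bad A 1 M1
    exact ⟨w ++ canopyAux 0 M2, by simp only [lb, ins, canopyAux, hw]; simp⟩

/-- Synchronized interval relation. -/
def sle (X Y : BT) : Prop := tle X Y ∧ canopy X = canopy Y

theorem sle_size {X Y : BT} (h : sle X Y) : X.size = Y.size := tle_size h.1

theorem sle_node_iff {X A' M' : BT} : sle X (node A' M') ↔
    ∃ A M q, sle A A' ∧ sle M M' ∧ q < max 1 M.lb ∧ X = ins A q M := by
  constructor
  · rintro ⟨h, hc⟩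
    obtain ⟨A, M, q, h1, h2, rfl⟩ := tle_node_iff.1 h
    rw [← ins_min] at hc ⊢
    have hq : min q M.lb ≤ M.lb := by omega
    generalize min q M.lb = p at *
    have hp : p < max 1 M.lb := by
      by_contra hp
      have : p = M.lb := by omega
      subst this
      obtain ⟨w, hw⟩ := canopyAux_ins_bad A 1 M
      rw [canopy, hw, canopy] at hc
      simp only [canopyAux] at hc
      have := (List.append_inj hc (by simp only [length_canopyAux, tle_size h1])).2
      have hs := tle_size h2
      cases M with
      | leaf => simp [lb] at hp
      | node a b =>
        cases M' with
        | leaf => simp [size] at hs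
        | node c d =>
          obtain ⟨w', hw'⟩ := canopyAux_head c d 0
          rw [hw'] at this
          simp at this
    rw [canopy, canopyAux_ins _ _ _ _ hp, canopy] at hc
    simp only [canopyAux] at hc
    have := List.append_inj hc (by simp only [length_canopyAux, tle_size h1])
    exact ⟨A, M, p, ⟨h1, this.1⟩, ⟨h2, (canopy_zero_iff (tle_size h2)).1 this.2⟩, hp, rfl⟩
  · rintro ⟨A, M, q, h1, h2, hq, rfl⟩
    refine ⟨tle_node_iff.2 ⟨A, M, q, h1.1, h2.1, rfl⟩, ?_⟩
    rw [canopy, canopyAux_ins _ _ _ _ hq, canopy]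
    simp only [canopyAux]
    rw [(canopy_zero_iff (tle_size h2.1)).2 h2.2, show canopyAux 1 A = canopyAux 1 A' from h1.2]

theorem mir_mir : ∀ T : BT, mir (mir T) = T
  | leaf => rfl
  | node l r => by simp only [mir, mir_mir l, mir_mir r]

theorem size_mir : ∀ T : BT, (mir T).size = T.size
  | leaf => rfl
  | node l r => by simp only [mir, size, size_mir l, size_mir r]; omega

theorem mir_rot {X Y : BT} (h : Rot X Y) : Rot (mir Y) (mir X) := by
  induction h with
  | rotate A B C => exact .rotate _ _ _
  | left r _ ih => exact .right _ ih
  | right l _ ih => exact .left _ ih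

theorem mir_tle {X Y : BT} (h : tle X Y) : tle (mir Y) (mir X) := by
  induction h with
  | refl => exact .refl
  | tail _ h ih => exact .head (mir_rot h) ih

theorem canopyAux_mir : ∀ (T : BT) (b : ℕ), b ≤ 1 →
    canopyAux (1 - b) (mir T) = ((canopyAux b T).map (fun x => 1 - x)).reverse
  | leaf, b, _ => rfl
  | node l r, b, _ => by
    simp only [mir, canopyAux, List.map_append, List.reverse_append]
    rw [← canopyAux_mir l 1 (by omega), ← canopyAux_mir r 0 (by omega)]

theorem canopy_mir {X Y : BT} (hs : X.size = Y.size) (h : canopy X = canopy Y) :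
    canopy (mir Y) = canopy (mir X) := by
  have h0 := (canopy_zero_iff hs).2 h
  have hX := canopyAux_mir X 0 (by omega)
  have hY := canopyAux_mir Y 0 (by omega)
  rw [h0] at hX
  exact hY.trans hX.symm

theorem mir_sle {X Y : BT} (h : sle X Y) : sle (mir Y) (mir X) :=
  ⟨mir_tle h.1, canopy_mir (sle_size h) h.2⟩

theorem mir_sle_iff {X Y : BT} : sle (mir Y) (mir X) ↔ sle X Y := by
  refine ⟨fun h => ?_, mir_sle⟩
  simpa only [mir_mir] using mir_sle h

theorem selfdual_iff {L R : BT} : sle (node L R) (mir (node L R)) ↔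
    sle L (mir R) ∨ ∃ A M q, sle A (mir R) ∧ sle M (mir M) ∧ q < M.lb ∧ L = ins A q M := by
  simp only [mir]
  rw [sle_node_iff]
  constructor
  · rintro ⟨A, N, q, h1, h2, hq, h⟩
    cases q with
    | zero =>
      simp only [ins, node.injEq] at h
      obtain ⟨rfl, rfl⟩ := h
      exact .inl h1
    | succ q =>
      cases N with
      | leaf => simp [lb] at hq
      | node M M2 =>
        simp only [ins, node.injEq] at h
        obtain ⟨hL, rfl⟩ := h
        simp only [lb] at hq
        have h3 := mir_sle h2
        rw [mir_mir, mir, sle_node_iff] at h3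
        obtain ⟨A', M', q', h4, h5, hq', hL'⟩ := h3
        have hs : A.size = A'.size := by rw [sle_size h1, sle_size h4]
        have hlb : max 1 M'.lb ≤ M'.lb + 1 := by omega
        obtain ⟨rfl, rfl, rfl⟩ := ins_inj hs q M q' M' (by omega) (by omega) (hL.symm.trans hL')
        exact .inr ⟨A, M, q, h1, h5, by omega, hL⟩
  · rintro (h | ⟨A, M, q, h1, h2, hq, rfl⟩)
    · refine ⟨L, R, 0, h, ?_, by omega, rfl⟩
      have := mir_sle h
      rwa [mir_mir] at this
    · refine ⟨A, node M R, q + 1, h1, ?_, by simp only [lb]; omega, rfl⟩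
      rw [← mir_sle_iff, mir_mir, mir, sle_node_iff]
      exact ⟨A, M, q, h1, h2, by omega, rfl⟩

theorem no_even : ∀ (n : ℕ) (T : BT), T.size = n → 1 ≤ n → sle T (mir T) → n % 2 = 1 := by
  intro n
  induction n using Nat.strong_induction_on with
  | _ n ih =>
    intro T hT hn h
    cases T with
    | leaf => simp only [size] at hT; omega
    | node L R =>
      simp only [size] at hT
      rcases selfdual_iff.1 h with h | ⟨A, M, q, h1, h2, hq, rfl⟩
      · have := sle_size h
        rw [size_mir] at this
        omega
      · have := sle_size h1
        rw [size_mir] at this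
        rw [size_ins] at hT
        have hM : 1 ≤ M.size := by
          cases M with
          | leaf => simp [lb] at hq
          | node a b => simp only [size]; omega
        have := ih M.size (by omega) M rfl hM h2
        omega

end BT

namespace SelfDualCount

open PowerSeries Finset

/-- Substitute `u = U(t)` in a power series in `t` whose coefficients are polynomials in `u`. -/
noncomputable def EF (U : PowerSeries ℚ) (f : PowerSeries (Polynomial ℚ)) : PowerSeries ℚ :=
  PowerSeries.mk fun n => ∑ p ∈ antidiagonal n, coeff p.2 (Polynomial.aeval U (coeff p.1 f))

theorem EF_mul (U : PowerSeries ℚ) (f g : PowerSeries (Polynomial ℚ)) :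
    EF U (f * g) = EF U f * EF U g := by
  ext n
  simp only [EF, coeff_mk, coeff_mul, map_sum, map_mul, Finset.sum_mul_sum]
  simp only [Finset.sum_sigma']
  refine Finset.sum_bij'
    (fun x _ => ⟨(x.2.1.1 + x.2.2.1, x.2.1.2 + x.2.2.2),
      ⟨(x.2.1.1, x.2.2.1), (x.2.1.2, x.2.2.2)⟩⟩)
    (fun x _ => ⟨(x.2.1.1 + x.2.2.1, x.2.1.2 + x.2.2.2),
      ⟨(x.2.1.1, x.2.2.1), (x.2.1.2, x.2.2.2)⟩⟩)
    ?_ ?_ ?_ ?_ ?_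
  all_goals
    rintro ⟨⟨a, b⟩, ⟨c, d⟩, e, f⟩ h
    simp only [mem_sigma, HasAntidiagonal.mem_antidiagonal] at h
    obtain ⟨h1, h2, h3⟩ := h
    subst h2 h3
    try simp
    try omega

theorem EF_add (U : PowerSeries ℚ) (f g : PowerSeries (Polynomial ℚ)) :
    EF U (f + g) = EF U f + EF U g := by
  ext n
  simp only [EF, coeff_mk, map_add, Finset.sum_add_distrib]

theorem EF_sub (U : PowerSeries ℚ) (f g : PowerSeries (Polynomial ℚ)) :
    EF U (f - g) = EF U f - EF U g := by
  ext n
  simp only [EF, coeff_mk, map_sub, Finset.sum_sub_distrib]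

theorem EF_C (U : PowerSeries ℚ) (p : Polynomial ℚ) :
    EF U (C p) = Polynomial.aeval U p := by
  ext n
  simp only [EF, coeff_mk, coeff_C]
  rw [Finset.sum_eq_single (0, n)]
  · simp
  · rintro ⟨a, b⟩ h1 h2
    have : a ≠ 0 := by
      rintro rfl
      simp at h1
      simp [h1] at h2
    simp [this]
  · simp

theorem EF_map (U : PowerSeries ℚ) (f : PowerSeries ℚ) :
    EF U (PowerSeries.map Polynomial.C f) = f := by
  ext n
  simp only [EF, coeff_mk, coeff_map, Polynomial.aeval_C, PowerSeries.algebraMap_apply]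
  rw [Finset.sum_eq_single (n, 0)]
  · simp
  · rintro ⟨a, b⟩ h1 h2
    have : b ≠ 0 := by
      rintro rfl
      simp at h1
      simp [h1] at h2
    simp [coeff_C, this]
  · simp

theorem EF_X (U : PowerSeries ℚ) : EF U X = X := by
  have := EF_map U X
  simpa using this

theorem EF_one (U : PowerSeries ℚ) : EF U 1 = 1 := by
  have := EF_map U 1
  simpa using this

theorem EF_lip (U V : PowerSeries ℚ) (f : PowerSeries (Polynomial ℚ)) (n : ℕ)
    (h : X ^ n ∣ U - V) : X ^ n ∣ EF U f - EF V f := by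
  rw [X_pow_dvd_iff]
  intro m hm
  simp only [EF, map_sub, coeff_mk, ← Finset.sum_sub_distrib]
  refine Finset.sum_eq_zero fun p hp => ?_
  rw [← map_sub]
  have h1 : U - V ∣ Polynomial.aeval U (coeff p.1 f) - Polynomial.aeval V (coeff p.1 f) := by
    rw [Polynomial.aeval_def, Polynomial.aeval_def, Polynomial.eval₂_eq_eval_map,
      Polynomial.eval₂_eq_eval_map]
    exact Polynomial.sub_dvd_eval_sub _ _ _
  have h2 := (X_pow_dvd_iff.1 (h.trans h1))
  apply h2
  have := HasAntidiagonal.mem_antidiagonal.1 hp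
  omega

/-- Contractions have fixed points. -/
theorem exists_fixed (Φ : PowerSeries ℚ → PowerSeries ℚ)
    (h : ∀ n U V, X ^ n ∣ U - V → X ^ (n + 1) ∣ Φ U - Φ V) : ∃ U, Φ U = U := by
  have hit : ∀ n, X ^ n ∣ Φ^[n + 1] 0 - Φ^[n] 0 := by
    intro n
    induction n with
    | zero => simp
    | succ n ih =>
      rw [Function.iterate_succ_apply' Φ (n + 1), Function.iterate_succ_apply' Φ n]
      rw [Function.iterate_succ_apply' Φ n] at ih
      exact h _ _ _ ih
  have hit2 : ∀ n m, n ≤ m → X ^ n ∣ Φ^[m] 0 - Φ^[n] 0 := by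
    intro n m hm
    induction m, hm using Nat.le_induction with
    | base => simp
    | succ m hm ih =>
      have := dvd_add ((pow_dvd_pow X hm).trans (hit m)) ih
      simpa using this
  let U : PowerSeries ℚ := PowerSeries.mk fun n => coeff n (Φ^[n + 1] 0)
  have hU : ∀ n, X ^ n ∣ U - Φ^[n] 0 := by
    intro n
    rw [X_pow_dvd_iff]
    intro m hm
    have := X_pow_dvd_iff.1 (hit2 (m + 1) n (by omega)) m (by omega)
    rw [map_sub] at this ⊢
    simp only [U, coeff_mk]
    linarith
  refine ⟨U, ?_⟩
  ext n
  have h1 := X_pow_dvd_iff.1 (h n _ _ (hU n)) n (by omega)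
  have h2 := X_pow_dvd_iff.1 (hU (n + 1)) n (by omega)
  rw [← Function.iterate_succ_apply' Φ] at h1
  rw [map_sub] at h1 h2
  linarith

/-- The quadratic method, for the counting series of synchronized intervals. -/
theorem quad_method (W : PowerSeries (Polynomial ℚ)) (W1 : PowerSeries ℚ)
    (hW : (C Polynomial.X - 1) * (W - 1) =
      X * C Polynomial.X * W * (C Polynomial.X - 1 + W - PowerSeries.map Polynomial.C W1)) :
    ∃ U : PowerSeries ℚ, U = 1 + X * U ^ 3 ∧ EF U W = U := by
  have heq : ∀ U, (U - 1) * (EF U W - 1) = X * U * EF U W * (U - 1 + EF U W - W1) := by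
    intro U
    have := congrArg (EF U) hW
    simpa only [EF_mul, EF_add, EF_sub, EF_one, EF_X, EF_C, EF_map, Polynomial.aeval_X] using this
  obtain ⟨U, hU⟩ := exists_fixed (fun U => 1 + X * U * (U - 1 + 2 * EF U W - W1)) (by
    intro n U V h
    have h2 := EF_lip U V W n h
    have e : 1 + X * U * (U - 1 + 2 * EF U W - W1) - (1 + X * V * (V - 1 + 2 * EF V W - W1)) =
      X * ((U - V) * (U - 1 + 2 * EF U W - W1) + V * ((U - V) + 2 * (EF U W - EF V W))) := by
      ring
    rw [e, pow_succ']
    exact mul_dvd_mul_left _ (dvd_add (h.mul_right _) ((dvd_add h (h2.mul_left _)).mul_left _)))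
  have hder : EF U W - 1 = X * EF U W * (U - 1 + EF U W - W1) + X * U * EF U W := by
    rw [← sub_eq_zero]
    ext n
    have h1 := heq U
    have h2 := heq (U + X ^ (n + 1))
    obtain ⟨d, hd⟩ := EF_lip (U + X ^ (n + 1)) U W (n + 1) (by simp)
    rw [sub_eq_iff_eq_add] at hd
    rw [hd] at h2
    generalize EF U W = w at *
    generalize hε : (X : PowerSeries ℚ) ^ (n + 1) = ε at *
    have hne : ε ≠ 0 := by rw [← hε]; exact pow_ne_zero _ X_ne_zero
    have key : ε * (w - 1 - (X * w * (U - 1 + w - W1) + X * U * w)) =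
        ε * (ε * (-d + X * U * d * (1 + d) + X * w * (1 + d) +
          X * d * (U - 1 + w - W1) + X * d * ε * (1 + d))) := by
      linear_combination h2 - h1 + ε * d * hU
    have := mul_left_cancel₀ hne key
    rw [this, map_zero, ← hε]
    exact X_pow_dvd_iff.1 (Dvd.intro _ rfl) n (by omega)
  have h1 := heq U
  generalize hw : EF U W = w at *
  have hUW : U = w := by
    have hz : (U - w) * (1 - X * (U - 1 + w - W1)) = 0 := by
      linear_combination (-1 : PowerSeries ℚ) * hU - hder
    have hne : (1 - X * (U - 1 + w - W1)) ≠ 0 := by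
      intro h
      have := congrArg (coeff 0) h
      simp at this
    have := (mul_eq_zero.1 hz).resolve_right hne
    linear_combination this
  subst hUW
  refine ⟨U, ?_, hw⟩
  have hU0 : U ≠ 0 := by
    intro h
    rw [h] at hU
    simp at hU
  have hXU : X * U ^ 2 ≠ 0 := mul_ne_zero X_ne_zero (pow_ne_zero _ hU0)
  have e1 : X * (3 * U - 1 - W1) ^ 2 = (3 * U - 1 - W1) - U := by
    apply mul_left_cancel₀ hXU
    linear_combination h1 + (X * U * (3 * U - 1 - W1) + (U - 1)) * hU
  linear_combination (-1 : PowerSeries ℚ) * hU + X * U * ((3 * U - 1 - W1) * hU - U * e1)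

/-- Coefficients of the square of the ternary tree series. -/
theorem coeff_sq (U : PowerSeries ℚ) (hU : U = 1 + X * U ^ 3) (k : ℕ) :
    ((k : ℚ) + 1) * coeff k (U ^ 2) = (Nat.choose (3 * k + 1) k : ℚ) := by
  set D := derivative ℚ with hD
  set B := D (X * U ^ 2) with hB
  have hU0 : coeff 0 U = 1 := by rw [hU]; simp
  have hc0 : (3 - 2 * U : PowerSeries ℚ) ≠ 0 := by
    intro h
    have := congrArg (coeff 0) h
    simp only [coeff_zero_eq_constantCoeff, map_sub, map_mul, map_ofNat, map_zero] at this hU0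
    rw [hU0] at this
    norm_num at this
  have hUne : U ≠ 0 := by rintro rfl; simp at hU0
  have d1 : D U = U ^ 3 + 3 * X * U ^ 2 * D U := by
    have := congrArg D hU
    simp only [map_add, Derivation.leibniz, Derivation.leibniz_pow, smul_eq_mul, nsmul_eq_mul, hD,
      derivative_X, derivative_one] at this
    linear_combination this
  have d2 : D U * (3 - 2 * U) = U ^ 4 := by
    linear_combination U * d1 - 3 * D U * hU
  have b0 : B = U ^ 2 + 2 * X * U * D U := by
    simp only [hB, Derivation.leibniz, Derivation.leibniz_pow, smul_eq_mul, nsmul_eq_mul, hD,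
      derivative_X]
    ring
  have b1 : B * (3 - 2 * U) = U ^ 2 := by
    linear_combination (3 - 2 * U) * b0 + 2 * X * U * d2 - 2 * U ^ 2 * hU
  clear_value B
  have dn3 : D (3 : PowerSeries ℚ) = 0 := by
    simpa using D.map_natCast 3
  have dn2 : D (2 : PowerSeries ℚ) = 0 := by
    simpa using D.map_natCast 2
  have b2 : D B * (3 - 2 * U) ^ 3 = 2 * U ^ 5 * (3 - U) := by
    have e := congrArg D b1
    simp only [map_sub, Derivation.leibniz, Derivation.leibniz_pow, smul_eq_mul, nsmul_eq_mul,
      dn2, dn3] at e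
    push_cast at e
    linear_combination (3 - 2 * U) ^ 2 * e + 2 * (3 - 2 * U) * (B + U) * d2 + 2 * U ^ 4 * b1
  have b3 : D (D B) * (3 - 2 * U) ^ 5 =
    12 * U ^ 9 * (3 - U) + U ^ 8 * (30 - 12 * U) * (3 - 2 * U) := by
    have e := congrArg D b2
    simp only [map_sub, Derivation.leibniz, Derivation.leibniz_pow, smul_eq_mul, nsmul_eq_mul,
      dn2, dn3] at e
    push_cast at e
    linear_combination (3 - 2 * U) ^ 2 * e + 6 * (3 - 2 * U) ^ 3 * D B * d2 + 6 * U ^ 4 * b2 +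
      (30 * U ^ 4 - 12 * U ^ 5) * (3 - 2 * U) * d2
  have hs : X * U ^ 3 = U - 1 := by linear_combination -hU
  have ode : 4 * X * D (D B) + 6 * D B = 27 * X ^ 2 * D (D B) + 81 * X * D B + 24 * B := by
    apply mul_right_cancel₀ (pow_ne_zero 5 hc0)
    generalize hQ : 12 * U * (3 - U) + (30 - 12 * U) * (3 - 2 * U) = Q
    have b3' : D (D B) * (3 - 2 * U) ^ 5 = U ^ 8 * Q := by rw [b3, ← hQ]; ring
    have goal : 4 * X * (U ^ 8 * Q) + 6 * (2 * U ^ 5 * (3 - U)) * (3 - 2 * U) ^ 2 =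
        27 * X ^ 2 * (U ^ 8 * Q) + 81 * X * (2 * U ^ 5 * (3 - U)) * (3 - 2 * U) ^ 2 +
          24 * U ^ 2 * (3 - 2 * U) ^ 4 := by
      have : 4 * U ^ 5 * Q * (U - 1) + 6 * (2 * U ^ 5 * (3 - U)) * (3 - 2 * U) ^ 2 =
        27 * U ^ 2 * Q * (U - 1) ^ 2 + 81 * (2 * U ^ 2 * (3 - U)) * (U - 1) * (3 - 2 * U) ^ 2 +
          24 * U ^ 2 * (3 - 2 * U) ^ 4 := by
        rw [← hQ]; ring
      linear_combination this + (4 * U ^ 5 * Q - 27 * U ^ 2 * Q * (X * U ^ 3 + U - 1) -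
        162 * U ^ 2 * (3 - U) * (3 - 2 * U) ^ 2) * hs
    linear_combination goal + (4 * X - 27 * X ^ 2) * b3' +
      (6 - 81 * X) * (3 - 2 * U) ^ 2 * b2 - 24 * (3 - 2 * U) ^ 4 * b1
  have theta : ∀ (f : PowerSeries ℚ) (k : ℕ), coeff k (X * D f) = k * coeff k f := by
    intro f k
    cases k with
    | zero => simp
    | succ k =>
      rw [coeff_succ_X_mul, hD, coeff_derivative]
      push_cast
      ring
  have hrec : ∀ k : ℕ, (2 * (k : ℚ) + 3) * (2 * k + 2) * coeff (k + 1) B =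
      3 * (3 * k + 4) * (3 * k + 2) * coeff k B := by
    intro k
    have ode' : C (4 : ℚ) * (X * D (D B)) + C (6 : ℚ) * D B =
        C (27 : ℚ) * (X * D (X * D B)) + C (54 : ℚ) * (X * D B) + C (24 : ℚ) * B := by
      have : D (X * D B) = D B + X * D (D B) := by
        simp only [Derivation.leibniz, smul_eq_mul, hD, derivative_X]
        ring
      rw [this]
      simp only [map_ofNat]
      linear_combination ode
    have := congrArg (coeff k) ode'
    simp only [map_add, coeff_C_mul, theta] at this
    rw [hD, coeff_derivative] at this
    linear_combination this
  have hb : ∀ k : ℕ, coeff k B = (Nat.choose (3 * k + 1) k : ℚ) := by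
    intro k
    induction k with
    | zero =>
      rw [b0]
      simp only [coeff_zero_eq_constantCoeff] at hU0
      simp [hU0]
    | succ k ih =>
      have h := hrec k
      rw [ih] at h
      have h1 := Nat.choose_mul_factorial_mul_factorial (show k ≤ 3 * k + 1 by omega)
      have h2 := Nat.choose_mul_factorial_mul_factorial (show k + 1 ≤ 3 * (k + 1) + 1 by omega)
      rw [show 3 * k + 1 - k = 2 * k + 1 by omega] at h1
      rw [show 3 * (k + 1) + 1 - (k + 1) = 2 * k + 1 + 1 + 1 by omega] at h2
      rw [show 3 * (k + 1) + 1 = 3 * k + 1 + 1 + 1 + 1 by omega] at h2 ⊢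
      simp only [Nat.factorial_succ] at h1 h2
      qify at h1 h2
      have f1 : ((Nat.factorial k : ℕ) : ℚ) ≠ 0 := by exact_mod_cast Nat.factorial_ne_zero k
      have f2 : ((Nat.factorial (2 * k) : ℕ) : ℚ) ≠ 0 := by
        exact_mod_cast Nat.factorial_ne_zero (2 * k)
      have f3 : (2 * (k : ℚ) + 3) * (2 * k + 2) * ((k + 1) * (2 * k + 1)) ≠ 0 := by positivity
      apply mul_left_cancel₀ (mul_ne_zero f3 (mul_ne_zero f1 f2))
      linear_combination ((k + 1) * (2 * k + 1)) *
        ((Nat.factorial k : ℚ) * (Nat.factorial (2 * k) : ℚ)) * h +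
        3 * (k + 1) * (3 * k + 4) * (3 * k + 2) * h1 - h2
  rw [← hb k, hB, hD, coeff_derivative, coeff_succ_X_mul]
  ring

end SelfDualCount

namespace BT

open Finset

theorem finite_size (n : ℕ) : {T : BT | T.size = n}.Finite := by
  induction n using Nat.strong_induction_on with
  | _ n ih =>
    have : {T : BT | T.size = n} ⊆ {leaf} ∪ ⋃ i ∈ Set.Iio n, ⋃ j ∈ Set.Iio n,
        Set.image2 node {T : BT | T.size = i} {T : BT | T.size = j} := by
      intro T hT
      cases T with
      | leaf => exact .inl rfl
      | node l r =>
        right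
        simp only [Set.mem_ofPred_eq, size] at hT
        simp only [Set.mem_iUnion]
        exact ⟨l.size, by simp only [Set.mem_Iio]; omega, r.size,
          by simp only [Set.mem_Iio]; omega, l, rfl, r, rfl, rfl⟩
    refine Set.Finite.subset (Set.Finite.union (Set.finite_singleton _) ?_) this
    refine Set.Finite.biUnion (Set.finite_Iio n) fun i hi => ?_
    refine Set.Finite.biUnion (Set.finite_Iio n) fun j hj => ?_
    exact Set.Finite.image2 _ (ih i hi) (ih j hj)

theorem finite_sync (n : ℕ) : {p : BT × BT | p.1.size = n ∧ sle p.1 p.2}.Finite := by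
  refine Set.Finite.subset ((finite_size n).prod (finite_size n)) ?_
  rintro ⟨a, b⟩ ⟨h1, h2⟩
  exact ⟨h1, (sle_size h2).symm.trans h1⟩

theorem finite_self (k : ℕ) : {T : BT | T.size = 2 * k + 1 ∧ sle T (mir T)}.Finite :=
  Set.Finite.subset (finite_size (2 * k + 1)) fun _ h => h.1

/-- Synchronized intervals of size `n`. -/
noncomputable def Sf (n : ℕ) : Finset (BT × BT) := (finite_sync n).toFinset

/-- Lower trees of self-dual synchronized intervals of size `2k+1`. -/
noncomputable def Ff (k : ℕ) : Finset BT := (finite_self k).toFinset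

theorem mem_Sf {n : ℕ} {p : BT × BT} : p ∈ Sf n ↔ p.1.size = n ∧ sle p.1 p.2 := by
  simp [Sf]

theorem mem_Ff {k : ℕ} {T : BT} : T ∈ Ff k ↔ T.size = 2 * k + 1 ∧ sle T (mir T) := by
  simp [Ff]

noncomputable def Wp (n : ℕ) : Polynomial ℚ := ∑ p ∈ Sf n, Polynomial.X ^ p.1.lb

noncomputable def Dp (n : ℕ) : Polynomial ℚ :=
  ∑ p ∈ Sf n, ∑ q ∈ range (max 1 p.1.lb), Polynomial.X ^ (q + 1)

noncomputable def Fp (k : ℕ) : Polynomial ℚ := ∑ T ∈ Ff k, Polynomial.X ^ T.lb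

noncomputable def Ep (k : ℕ) : Polynomial ℚ :=
  ∑ T ∈ Ff k, ∑ q ∈ range T.lb, Polynomial.X ^ (q + 2)

theorem Sf_zero : Sf 0 = {(leaf, leaf)} := by
  ext ⟨a, b⟩
  rw [mem_Sf, mem_singleton]
  constructor
  · rintro ⟨h1, h2⟩
    have h3 := sle_size h2
    simp only at h1 h2 h3
    cases a <;> cases b <;> simp_all [size]
  · intro h
    cases h
    exact ⟨rfl, .refl, rfl⟩

theorem lb_pos {T : BT} (h : T.size ≠ 0) : 1 ≤ T.lb := by
  cases T with
  | leaf => simp [size] at h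
  | node a b => simp only [lb]; omega

theorem Wp_succ (n : ℕ) : Wp (n + 1) = ∑ ij ∈ antidiagonal n, Wp ij.1 * Dp ij.2 := by
  simp only [Wp, Dp, Finset.sum_mul_sum]
  simp only [Finset.mul_sum, Finset.sum_sigma']
  symm
  refine Finset.sum_bij (fun x _ => (ins x.2.1.1 x.2.2.2 x.2.2.1.1, node x.2.1.2 x.2.2.1.2))
    ?_ ?_ ?_ ?_
  · rintro ⟨⟨i, j⟩, ⟨a, a'⟩, ⟨m, m'⟩, q⟩ h
    simp only [mem_sigma, HasAntidiagonal.mem_antidiagonal, mem_Sf, mem_range] at h ⊢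
    obtain ⟨h1, ⟨h2, h3⟩, ⟨h4, h5⟩, h6⟩ := h
    refine ⟨by rw [size_ins]; omega, sle_node_iff.2 ⟨a, m, q, h3, h5, h6, rfl⟩⟩
  · rintro ⟨⟨i, j⟩, ⟨a, a'⟩, ⟨m, m'⟩, q⟩ h ⟨⟨k, l⟩, ⟨b, b'⟩, ⟨o, o'⟩, r⟩ h' e
    simp only [mem_sigma, HasAntidiagonal.mem_antidiagonal, mem_Sf, mem_range] at h h' e
    obtain ⟨h1, ⟨h2, h3⟩, ⟨h4, h5⟩, h6⟩ := h
    obtain ⟨g1, ⟨g2, g3⟩, ⟨g4, g5⟩, g6⟩ := h'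
    simp only [Prod.mk.injEq, node.injEq] at e
    obtain ⟨e1, rfl, rfl⟩ := e
    have hq : q ≤ m.lb := by omega
    have hr : r ≤ o.lb := by omega
    obtain ⟨rfl, rfl, rfl⟩ := ins_inj (by rw [sle_size h3, sle_size g3]) _ _ _ _ hq hr e1
    subst h2 h4 g2 g4
    rfl
  · rintro ⟨X, Y⟩ h
    rw [mem_Sf] at h
    obtain ⟨h1, h2⟩ := h
    simp only at h1 h2
    cases Y with
    | leaf =>
      have := sle_size h2
      simp [size] at this
      omega
    | node A' M' =>
      obtain ⟨A, M, q, h3, h4, h5, rfl⟩ := sle_node_iff.1 h2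
      rw [size_ins] at h1
      refine ⟨⟨(A.size, M.size), (A, A'), (M, M'), q⟩, ?_, rfl⟩
      simp only [mem_sigma, HasAntidiagonal.mem_antidiagonal, mem_Sf, mem_range]
      exact ⟨by omega, ⟨trivial, h3⟩, ⟨trivial, h4⟩, h5⟩
  · rintro ⟨⟨i, j⟩, ⟨a, a'⟩, ⟨m, m'⟩, q⟩ h
    simp only [mem_sigma, HasAntidiagonal.mem_antidiagonal, mem_Sf, mem_range] at h ⊢
    have hq : q ≤ m.lb := by omega
    rw [lb_ins _ _ _ hq]
    ring

theorem Fp_eq (k : ℕ) : Fp k = Polynomial.X * Wp k +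
    ∑ ij ∈ (range k).sigma (fun i => range k) with ij.1 + ij.2 + 1 = k, Wp ij.1 * Ep ij.2 := by
  simp only [Wp, Ep, Fp, Finset.sum_mul_sum]
  simp only [Finset.mul_sum, Finset.sum_sigma']
  refine Eq.trans ?_ (Finset.sum_disjSum _ _ (fun x => Sum.elim
    (fun p : BT × BT => Polynomial.X * Polynomial.X ^ p.1.lb)
    (fun x : (_ : (_ : ℕ) × ℕ) × (_ : BT × BT) × (_ : BT) × ℕ =>
      (Polynomial.X ^ x.2.1.1.lb * Polynomial.X ^ (x.2.2.2 + 2) : Polynomial ℚ)) x))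
  symm
  refine Finset.sum_bij (fun x _ => Sum.elim (fun p : BT × BT => node p.1 (mir p.2))
    (fun x : (_ : (_ : ℕ) × ℕ) × (_ : BT × BT) × (_ : BT) × ℕ =>
      node (ins x.2.1.1 x.2.2.2 x.2.2.1) (mir x.2.1.2)) x)
    ?_ ?_ ?_ ?_
  · rintro (⟨a, b⟩ | ⟨⟨i, j⟩, ⟨a, a'⟩, m, q⟩) h
    · simp only [inl_mem_disjSum, mem_Sf, mem_Ff, Sum.elim_inl] at h ⊢
      have := sle_size h.2
      refine ⟨by simp only [size, size_mir]; omega, selfdual_iff.2 (.inl ?_)⟩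
      rw [mir_mir]; exact h.2
    · simp only [inr_mem_disjSum, mem_sigma, mem_filter, mem_Sf, mem_Ff, mem_range,
        Sum.elim_inr] at h ⊢
      obtain ⟨⟨-, h1⟩, ⟨h2, h3⟩, ⟨h4, h5⟩, h6⟩ := h
      have := sle_size h3
      refine ⟨by simp only [size, size_mir, size_ins]; omega,
        selfdual_iff.2 (.inr ⟨a, m, q, ?_, h5, h6, rfl⟩)⟩
      rw [mir_mir]; exact h3
  · have mir_inj : ∀ {a b : BT}, mir a = mir b → a = b := by
      intro a b h
      rw [← mir_mir a, h, mir_mir]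
    rintro (⟨a, b⟩ | ⟨⟨i, j⟩, ⟨a, a'⟩, m, q⟩) h (⟨c, d⟩ | ⟨⟨k, l⟩, ⟨b, b'⟩, o, r⟩) h' e
    all_goals
      simp only [inl_mem_disjSum, inr_mem_disjSum, mem_sigma, mem_filter, mem_Sf, mem_Ff,
        mem_range, Sum.elim_inr, Sum.elim_inl, node.injEq] at h h' e
      obtain ⟨e1, e2⟩ := e
      have e3 := mir_inj e2
      subst e3
    · subst e1
      rfl
    · have := congrArg size e1
      have s1 := sle_size h.2
      have s2 := sle_size h'.2.1.2
      rw [size_ins] at this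
      omega
    · have := congrArg size e1
      have s1 := sle_size h'.2
      have s2 := sle_size h.2.1.2
      rw [size_ins] at this
      omega
    · obtain ⟨⟨-, h1⟩, ⟨h2, h3⟩, ⟨h4, h5⟩, h6⟩ := h
      obtain ⟨⟨-, g1⟩, ⟨g2, g3⟩, ⟨g4, g5⟩, g6⟩ := h'
      obtain ⟨rfl, rfl, rfl⟩ := ins_inj (by rw [sle_size h3, sle_size g3]) _ _ _ _ h6.le g6.le e1
      have : j = l := by omega
      subst this h2 g2
      rfl
  · intro T h
    rw [mem_Ff] at h
    obtain ⟨h1, h2⟩ := h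
    cases T with
    | leaf => simp [size] at h1
    | node L R =>
      simp only [size] at h1
      rcases selfdual_iff.1 h2 with h3 | ⟨A, M, q, h3, h4, h5, rfl⟩
      · refine ⟨.inl (L, mir R), ?_, by simp [mir_mir]⟩
        have := sle_size h3
        rw [size_mir] at this
        simp only [inl_mem_disjSum, mem_Sf]
        exact ⟨by omega, h3⟩
      · have hM : M.size ≠ 0 := by
          cases M with
          | leaf => simp [lb] at h5
          | node a b => simp [size]
        have hodd := no_even _ M rfl (by omega) h4
        have := sle_size h3
        rw [size_mir] at this
        rw [size_ins] at h1
        refine ⟨.inr ⟨⟨A.size, M.size / 2⟩, (A, mir R), M, q⟩, ?_, by simp [mir_mir]⟩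
        simp only [inr_mem_disjSum, mem_sigma, mem_filter, mem_Sf, mem_Ff, mem_range]
        exact ⟨⟨⟨by omega, by omega⟩, by omega⟩, ⟨trivial, h3⟩, ⟨by omega, h4⟩, h5⟩
  · rintro (⟨a, b⟩ | ⟨⟨i, j⟩, ⟨a, a'⟩, m, q⟩) h
    · simp only [Sum.elim_inl, lb]
      ring
    · simp only [inr_mem_disjSum, mem_sigma, mem_filter, mem_Sf, mem_Ff, mem_range,
        Sum.elim_inr] at h ⊢
      rw [lb, lb_ins _ _ _ h.2.2.2.le]
      ring

theorem Fp_zero : Fp 0 = Polynomial.X * Wp 0 := by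
  rw [Fp_eq]; simp

theorem Fp_succ (k : ℕ) : Fp (k + 1) = Polynomial.X * Wp (k + 1) +
    ∑ ij ∈ antidiagonal k, Wp ij.1 * Ep ij.2 := by
  rw [Fp_eq]
  congr 1
  refine Finset.sum_bij' (fun x _ => (x.1, x.2)) (fun x _ => ⟨x.1, x.2⟩) ?_ ?_ ?_ ?_ ?_
  · rintro ⟨i, j⟩ h
    simp only [mem_filter, mem_sigma, mem_range, HasAntidiagonal.mem_antidiagonal] at h ⊢
    omega
  · rintro ⟨i, j⟩ h
    simp only [mem_filter, mem_sigma, mem_range, HasAntidiagonal.mem_antidiagonal] at h ⊢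
    omega
  · intros; rfl
  · intros; rfl
  · intros; rfl

theorem geom_aux (n : ℕ) : (Polynomial.X - 1 : Polynomial ℚ) * ∑ q ∈ range n, Polynomial.X ^ q =
    Polynomial.X ^ n - 1 := mul_geom_sum _ _

theorem Dp_zero : Dp 0 = Polynomial.X := by
  simp [Dp, Sf_zero, lb]

theorem Wp_zero : Wp 0 = 1 := by
  simp [Wp, Sf_zero, lb]

theorem Dp_succ (n : ℕ) : (Polynomial.X - 1) * Dp (n + 1) =
    Polynomial.X * (Wp (n + 1) - Polynomial.C ((Wp (n + 1)).eval 1)) := by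
  have : (Wp (n + 1)).eval 1 = ∑ p ∈ Sf (n + 1), (1 : ℚ) := by
    simp [Wp, Polynomial.eval_finsetSum]
  rw [this, map_sum, Wp, ← Finset.sum_sub_distrib, Dp, Finset.mul_sum, Finset.mul_sum]
  refine Finset.sum_congr rfl fun p hp => ?_
  have h := (mem_Sf.1 hp).1
  have := lb_pos (T := p.1) (by omega)
  rw [max_eq_right this, map_one, ← geom_aux]
  simp only [pow_succ, ← Finset.sum_mul]
  ring

theorem Ep_eq (k : ℕ) : (Polynomial.X - 1) * Ep k =
    Polynomial.X ^ 2 * (Fp k - Polynomial.C ((Fp k).eval 1)) := by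
  have : (Fp k).eval 1 = ∑ p ∈ Ff k, (1 : ℚ) := by
    simp [Fp, Polynomial.eval_finsetSum]
  rw [this, map_sum, Fp, ← Finset.sum_sub_distrib, Ep, Finset.mul_sum, Finset.mul_sum]
  refine Finset.sum_congr rfl fun p hp => ?_
  rw [map_one, ← geom_aux]
  simp only [pow_add, ← Finset.sum_mul]
  ring

open PowerSeries in
theorem card_Ff (k : ℕ) : ((k : ℚ) + 1) * ((Ff k).card : ℚ) = (Nat.choose (3 * k + 1) k : ℚ) := by
  set W : PowerSeries (Polynomial ℚ) := PowerSeries.mk Wp with hW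
  set F : PowerSeries (Polynomial ℚ) := PowerSeries.mk Fp with hF
  set D : PowerSeries (Polynomial ℚ) := PowerSeries.mk Dp with hD
  set E : PowerSeries (Polynomial ℚ) := PowerSeries.mk Ep with hE
  set W1 : PowerSeries ℚ := PowerSeries.mk fun n => (Wp n).eval 1 with hW1
  set F1 : PowerSeries ℚ := PowerSeries.mk fun n => (Fp n).eval 1 with hF1
  have eW : W = 1 + X * (W * D) := by
    ext1 n
    cases n with
    | zero => simp [hW, Wp_zero]
    | succ n =>
      rw [map_add, coeff_succ_X_mul, coeff_mul]
      simp [hW, hD, Wp_succ, coeff_one]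
  have eD : (C Polynomial.X - 1) * D =
      C Polynomial.X * (C Polynomial.X - 1 + W - PowerSeries.map Polynomial.C W1) := by
    rw [show (C Polynomial.X - 1 : PowerSeries (Polynomial ℚ)) = C (Polynomial.X - 1) by simp]
    ext1 n
    rw [coeff_C_mul, coeff_C_mul]
    cases n with
    | zero =>
      rw [map_sub, coeff_map]
      simp [hD, hW, hW1, Dp_zero, Wp_zero]
      ring
    | succ n => simp [hD, hW, hW1, Dp_succ, coeff_C, coeff_one]
  have eF : F = C Polynomial.X * W + X * (W * E) := by
    ext1 n
    cases n with
    | zero => simp [hF, hW, Fp_zero]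
    | succ n =>
      rw [map_add, coeff_succ_X_mul, coeff_C_mul, coeff_mul]
      simp [hF, hW, hE, Fp_succ]
  have eE : (C Polynomial.X - 1) * E =
      C Polynomial.X ^ 2 * (F - PowerSeries.map Polynomial.C F1) := by
    rw [show (C Polynomial.X - 1 : PowerSeries (Polynomial ℚ)) = C (Polynomial.X - 1) by simp,
      ← map_pow]
    ext1 n
    rw [coeff_C_mul, coeff_C_mul]
    simp [hF, hE, hF1, Ep_eq]
  obtain ⟨U, hU, hw⟩ := SelfDualCount.quad_method W W1 (by
    linear_combination (C Polynomial.X - 1) * eW + X * W * eD)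
  have h1 := congrArg (SelfDualCount.EF U) eF
  have h2 := congrArg (SelfDualCount.EF U) eE
  rw [pow_two] at h2
  simp only [SelfDualCount.EF_mul, SelfDualCount.EF_add, SelfDualCount.EF_sub,
    SelfDualCount.EF_one, SelfDualCount.EF_X, SelfDualCount.EF_C, SelfDualCount.EF_map,
    Polynomial.aeval_X, hw] at h1 h2
  have hne : U - 1 ≠ 0 := by
    intro h
    have hz : X * U ^ 3 = 0 := by linear_combination h - hU
    have hU1 : U = 1 := by linear_combination h
    rw [hU1] at hz
    simp at hz
  have hF1U : F1 = U ^ 2 := by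
    apply mul_left_cancel₀ hne
    linear_combination (U - 1) * h1 + X * U * h2 + (F1 - SelfDualCount.EF U F) * hU
  have := SelfDualCount.coeff_sq U hU k
  rw [← hF1U] at this
  rw [← this]
  simp [hF1, Fp, Polynomial.eval_finsetSum]

end BT

theorem count_self_dual_synchronized_intervals (k : ℕ) :
    (1 ≤ k →
      {p : BT × BT | BT.interval p (2 * k) ∧ BT.synced p ∧ BT.selfDual p} = (∅ : Set (BT × BT))) ∧
    (k + 1) *
        Set.ncard {p : BT × BT | BT.interval p (2 * k + 1) ∧ BT.synced p ∧ BT.selfDual p} =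
      Nat.choose (3 * k + 1) k := by
  constructor
  · intro hk
    rw [Set.eq_empty_iff_forall_notMem]
    rintro ⟨T, T'⟩ ⟨⟨h1, h2, h3⟩, h4, h5, h6⟩
    simp only at h1 h2 h3 h5 h6
    subst h6
    have := BT.no_even _ T h1 (by omega) ⟨h3, h4⟩
    omega
  · have hset : {p : BT × BT | BT.interval p (2 * k + 1) ∧ BT.synced p ∧ BT.selfDual p} =
        (fun T => (T, BT.mir T)) '' (BT.Ff k : Set BT) := by
      ext ⟨T, T'⟩
      simp only [Set.mem_image, Finset.mem_coe, BT.mem_Ff, Set.mem_ofPred_eq, Prod.mk.injEq]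
      constructor
      · rintro ⟨⟨h1, h2, h3⟩, h4, h5, h6⟩
        simp only at h1 h2 h3 h5 h6
        subst h6
        exact ⟨T, ⟨h1, h3, h4⟩, rfl, rfl⟩
      · rintro ⟨S, ⟨h1, h2, h3⟩, rfl, rfl⟩
        exact ⟨⟨h1, (BT.size_mir S).trans h1, h2⟩, h3, BT.mir_mir S, rfl⟩
    rw [hset, Set.ncard_image_of_injective _ (fun a b h => (Prod.mk.inj h).1),
      Set.ncard_coe_finset]
    exact_mod_cast BT.card_Ff k
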